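/- Let $N \geq 3$, $k$ an integer with $0 \leq k < N-2$, and let $0 < \alpha < \gamma < N$ with $\alpha < N-k$. Let $K \subset \mathbb{R}^N$ be the coordinate subspace $\mathbb{R}^k \times \{0\} \subset \mathbb{R}^N$ (so $d_K(y) = |y''|$ where $y = (y', y'')$), and let $B \subset \mathbb{R}^N$ be a bounded set. Then $\sup_{z \in \mathbb{R}^N} \int_{B} |y - z|^{-N+\gamma}\, |y''|^{-\alpha}\, dy < \infty$. -/

import Mathlib

open MeasureTheory

/-!
Both singular factors are dominated, coordinate by coordinate, by products of one-dimensional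
singularities: `‖x‖ ^ (-∑ i, s i) ≤ ∏ i, |x i| ^ (-s i)`, since `|x i| ≤ ‖x‖`, and likewise for the
distance to the coordinate subspace on which the coordinates in `S` vanish. Spread `α` evenly over
the coordinates in `S`, as exponents `a i < 1`, and spread `N - γ` over all coordinates in
proportion to the room `1 - a i` that is left; because `α < γ`, every total `s i + a i` stays below
`1`. By Tonelli everything reduces to the one-variable functions `|t - z| ^ (-s) * |t| ^ (-a)` with
`s + a < 1`, whose integrals over an interval are bounded uniformly in `z`.
-/

open Metric Set

/-- The family `f` of functions, indexed by a parameter, is bounded in `L¹(μ)`. Integrability is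
required separately because the Bochner integral of a non-integrable function is `0`. -/
def IsL1Bounded {P X : Type*} [MeasurableSpace X] (f : P → X → ℝ) (μ : Measure X) : Prop :=
  ∃ C : ℝ, ∀ p, Integrable (f p) μ ∧ ∫ x, ‖f p x‖ ∂μ ≤ C

namespace IsL1Bounded

section

variable {P Q X Y : Type*} [MeasurableSpace X] [MeasurableSpace Y] {μ ν : Measure X}
  {f g : P → X → ℝ}

theorem exists_integral_le (hf : IsL1Bounded f μ) : ∃ C : ℝ, ∀ p, ∫ x, f p x ∂μ ≤ C :=
  hf.imp fun _ hC p ↦ (le_abs_self _).trans <| (norm_integral_le_integral_norm _).trans (hC p).2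

theorem add (hf : IsL1Bounded f μ) (hg : IsL1Bounded g μ) :
    IsL1Bounded (fun p x ↦ f p x + g p x) μ := by
  obtain ⟨C, hC⟩ := hf
  obtain ⟨D, hD⟩ := hg
  refine ⟨C + D, fun p ↦ ⟨(hC p).1.add (hD p).1, ?_⟩⟩
  calc ∫ x, ‖f p x + g p x‖ ∂μ
    _ ≤ ∫ x, (‖f p x‖ + ‖g p x‖) ∂μ :=
        integral_mono ((hC p).1.add (hD p).1).norm ((hC p).1.norm.add (hD p).1.norm)
          fun x ↦ norm_add_le _ _
    _ = ∫ x, ‖f p x‖ ∂μ + ∫ x, ‖g p x‖ ∂μ := integral_add (hC p).1.norm (hD p).1.norm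
    _ ≤ C + D := add_le_add (hC p).2 (hD p).2

theorem mono (hg : IsL1Bounded g μ) (hf : ∀ p, AEStronglyMeasurable (f p) μ)
    (hfg : ∀ p, ∀ᵐ x ∂μ, ‖f p x‖ ≤ ‖g p x‖) : IsL1Bounded f μ :=
  hg.imp fun _ hC p ↦
    have hfp : Integrable (f p) μ := (hC p).1.mono (hf p) (hfg p)
    ⟨hfp, (integral_mono_ae hfp.norm (hC p).1.norm (hfg p)).trans (hC p).2⟩

theorem mono_measure (hf : IsL1Bounded f μ) (hν : ν ≤ μ) : IsL1Bounded f ν :=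
  hf.imp fun _ hC p ↦ ⟨(hC p).1.mono_measure hν,
    (integral_mono_measure hν (.of_forall fun _ ↦ norm_nonneg _) (hC p).1.norm).trans (hC p).2⟩

theorem comp_param (hf : IsL1Bounded f μ) (φ : Q → P) : IsL1Bounded (fun q ↦ f (φ q)) μ :=
  hf.imp fun _ hC q ↦ hC (φ q)

theorem comp_measurePreserving {ρ : Measure Y} {e : Y → X} (hf : IsL1Bounded f μ)
    (he : MeasurePreserving e ρ μ) (he' : MeasurableEmbedding e) :
    IsL1Bounded (fun p y ↦ f p (e y)) ρ :=
  hf.imp fun _ hC p ↦ ⟨(he.integrable_comp_emb he').2 (hC p).1,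
    (he.integral_comp he' fun x ↦ ‖f p x‖).trans_le (hC p).2⟩

end

theorem pi_prod {P ι : Type*} [Fintype ι] {X : ι → Type*} [∀ i, MeasurableSpace (X i)]
    {μ : ∀ i, Measure (X i)} [∀ i, SigmaFinite (μ i)] {f : ∀ i, P → X i → ℝ}
    (hf : ∀ i, IsL1Bounded (f i) (μ i)) :
    IsL1Bounded (fun p (x : ∀ i, X i) ↦ ∏ i, f i p (x i)) (Measure.pi μ) := by
  choose C hC using hf
  refine ⟨∏ i, C i, fun p ↦ ⟨Integrable.fintype_prod_dep fun i ↦ (hC i p).1, ?_⟩⟩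
  simp only [norm_prod]
  rw [integral_fintype_prod_eq_prod (f := fun i x ↦ ‖f i p x‖)]
  exact Finset.prod_le_prod (fun i _ ↦ integral_nonneg fun _ ↦ norm_nonneg _) fun i _ ↦ (hC i p).2

end IsL1Bounded

theorem rpow_mul_rpow_le_rpow_add_add_rpow_add {u v s t : ℝ} (hu : 0 ≤ u) (hv : 0 ≤ v)
    (hs : 0 ≤ s) (ht : 0 ≤ t) : u ^ s * v ^ t ≤ u ^ (s + t) + v ^ (s + t) := by
  wlog huv : u ≤ v generalizing u v s t
  · rw [mul_comm, add_comm (u ^ _), add_comm s]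
    exact this hv hu ht hs (le_of_not_ge huv)
  calc u ^ s * v ^ t
    _ ≤ v ^ s * v ^ t := by gcongr
    _ = v ^ (s + t) := (Real.rpow_add_of_nonneg hv hs ht).symm
    _ ≤ u ^ (s + t) + v ^ (s + t) := le_add_of_nonneg_left (by positivity)

theorem rpow_neg_sum_le_prod_rpow_neg {ι : Type*} {T : Finset ι} {β x : ι → ℝ} {r : ℝ} (hr : 0 < r)
    (hβ : ∀ i ∈ T, 0 ≤ β i) (hx : ∀ i ∈ T, 0 < x i) (hxr : ∀ i ∈ T, x i ≤ r) :
    r ^ (-∑ i ∈ T, β i) ≤ ∏ i ∈ T, x i ^ (-β i) := by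
  rw [← Finset.sum_neg_distrib, Real.rpow_sum_of_pos hr]
  exact Finset.prod_le_prod (fun i _ ↦ by positivity) fun i hi ↦
    Real.rpow_le_rpow_of_nonpos (hx i hi) (hxr i hi) (neg_nonpos.2 (hβ i hi))

theorem sqrt_sum_sq_rpow_neg_sum_le_prod {ι : Type*} {T : Finset ι} {β x : ι → ℝ}
    (hT : T.Nonempty) (hβ : ∀ i ∈ T, 0 ≤ β i) (hx : ∀ i ∈ T, x i ≠ 0) :
    √(∑ i ∈ T, x i ^ 2) ^ (-∑ i ∈ T, β i) ≤ ∏ i ∈ T, |x i| ^ (-β i) := by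
  have hx_le (i : ι) (hi : i ∈ T) : |x i| ≤ √(∑ i ∈ T, x i ^ 2) :=
    Real.abs_le_sqrt (Finset.single_le_sum (fun j _ ↦ sq_nonneg (x j)) hi)
  obtain ⟨i₀, hi₀⟩ := hT
  exact rpow_neg_sum_le_prod_rpow_neg ((abs_pos.2 (hx i₀ hi₀)).trans_le (hx_le i₀ hi₀)) hβ
    (fun i hi ↦ abs_pos.2 (hx i hi)) hx_le

section Haar

variable {E : Type*} [NormedAddCommGroup E] [NormedSpace ℝ E] [FiniteDimensional ℝ E]
  [MeasurableSpace E] [BorelSpace E] {μ : Measure E} [μ.IsAddHaarMeasure] {A : Set E}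

theorem integrableOn_ball_norm_rpow_neg {p : ℝ} (hp0 : 0 ≤ p) (hp : p < Module.finrank ℝ E)
    (r : ℝ) : IntegrableOn (fun t : E ↦ ‖t‖ ^ (-p)) (ball 0 r) μ := by
  have hdim : 1 ≤ Module.finrank ℝ E := by exact_mod_cast hp0.trans_lt hp
  refine integrableOn_ball_of_norm_le_rpow (C := 1) hdim hp (.of_forall fun t ↦ ?_)
    (by fun_prop : Measurable fun t : E ↦ ‖t‖ ^ (-p)).aestronglyMeasurable
  rw [one_mul, Real.norm_of_nonneg (by positivity)]

theorem norm_rpow_neg_le_one_add_indicator_ball {F : Type*} [SeminormedAddCommGroup F] {p : ℝ}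
    (hp : 0 ≤ p) (t : F) :
    ‖t‖ ^ (-p) ≤ 1 + (ball (0 : F) 1).indicator (fun u ↦ ‖u‖ ^ (-p)) t := by
  by_cases ht : t ∈ ball (0 : F) 1
  · simp only [indicator_of_mem ht, le_add_iff_nonneg_left, zero_le_one]
  · simpa only [indicator_of_notMem ht, add_zero] using
      Real.rpow_le_one_of_one_le_of_nonpos (by simpa using ht) (neg_nonpos.2 hp)

theorem isL1Bounded_norm_sub_rpow_neg {p : ℝ} (hp0 : 0 ≤ p) (hp : p < Module.finrank ℝ E)
    (hA : μ A ≠ ⊤) : IsL1Bounded (fun z t : E ↦ ‖t - z‖ ^ (-p)) (μ.restrict A) := by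
  let h : E → ℝ := (ball 0 1).indicator fun t ↦ ‖t‖ ^ (-p)
  have hh : Integrable h μ :=
    (integrableOn_ball_norm_rpow_neg hp0 hp 1).integrable_indicator measurableSet_ball
  have h_shift : IsL1Bounded (fun z t ↦ h (t - z)) μ :=
    ⟨∫ t, ‖h t‖ ∂μ, fun z ↦ ⟨hh.comp_sub_right z,
      (integral_sub_right_eq_self (fun t ↦ ‖h t‖) z).le⟩⟩
  have h_one : IsL1Bounded (fun _ _ ↦ (1 : ℝ)) (μ.restrict A) :=
    ⟨_, fun _ : E ↦ ⟨integrableOn_const hA, le_rfl⟩⟩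
  refine (h_one.add (h_shift.mono_measure Measure.restrict_le_self)).mono
    (fun z ↦ (by fun_prop : Measurable fun t : E ↦ ‖t - z‖ ^ (-p)).aestronglyMeasurable)
    fun z ↦ .of_forall fun t ↦ ?_
  rw [Real.norm_of_nonneg (by positivity)]
  exact (norm_rpow_neg_le_one_add_indicator_ball hp0 (t - z)).trans (Real.le_norm_self _)

theorem isL1Bounded_norm_sub_rpow_neg_mul_norm_rpow_neg {s a : ℝ} (hs : 0 ≤ s) (ha : 0 ≤ a)
    (hsa : s + a < Module.finrank ℝ E) (hA : μ A ≠ ⊤) :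
    IsL1Bounded (fun z t : E ↦ ‖t - z‖ ^ (-s) * ‖t‖ ^ (-a)) (μ.restrict A) := by
  have h_sub := isL1Bounded_norm_sub_rpow_neg (add_nonneg hs ha) hsa hA
  refine (h_sub.add (h_sub.comp_param fun _ : E ↦ 0)).mono
    (fun z ↦ (by fun_prop : Measurable fun t : E ↦
      ‖t - z‖ ^ (-s) * ‖t‖ ^ (-a)).aestronglyMeasurable)
    fun z ↦ .of_forall fun t ↦ ?_
  rw [Real.norm_of_nonneg (by positivity), Real.norm_of_nonneg (by positivity), sub_zero]
  simpa only [Real.rpow_neg_eq_inv_rpow] using rpow_mul_rpow_le_rpow_add_add_rpow_add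
    (inv_nonneg.2 (norm_nonneg (t - z))) (inv_nonneg.2 (norm_nonneg t)) hs ha

end Haar

section Coordinates

variable {ι : Type*} [Fintype ι]

theorem isL1Bounded_prod_abs_sub_rpow_neg_mul_abs_rpow_neg {s a : ι → ℝ} (hs : ∀ i, 0 ≤ s i)
    (ha : ∀ i, 0 ≤ a i) (hsa : ∀ i, s i + a i < 1) {B : Set (EuclideanSpace ℝ ι)}
    (hB : Bornology.IsBounded B) :
    IsL1Bounded (fun z y : EuclideanSpace ℝ ι ↦ ∏ i, |y i - z i| ^ (-s i) * |y i| ^ (-a i))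
      (volume.restrict B) := by
  obtain ⟨R, hR⟩ := hB.exists_norm_le
  let box : Set (ι → ℝ) := univ.pi fun _ ↦ Icc (-R) R
  have h_box : IsL1Bounded (fun z y : ι → ℝ ↦ ∏ i, |y i - z i| ^ (-s i) * |y i| ^ (-a i))
      (volume.restrict box) := by
    rw [volume_pi, Measure.restrict_pi_pi]
    exact .pi_prod fun i ↦ (isL1Bounded_norm_sub_rpow_neg_mul_norm_rpow_neg (hs i) (ha i)
      (by simpa using hsa i) measure_Icc_lt_top.ne).comp_param fun z : ι → ℝ ↦ z i
  have hB_box : B ⊆ WithLp.ofLp ⁻¹' box := fun y hy i _ ↦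
    abs_le.1 ((PiLp.norm_apply_le y i).trans (hR y hy))
  have h_emb : MeasurableEmbedding (WithLp.ofLp : EuclideanSpace ℝ ι → ι → ℝ) :=
    (MeasurableEquiv.toLp 2 (ι → ℝ)).symm.measurableEmbedding
  exact ((h_box.comp_measurePreserving
    ((PiLp.volume_preserving_ofLp ι).restrict_preimage_emb h_emb box) h_emb).comp_param
      WithLp.ofLp).mono_measure (Measure.restrict_mono_set _ hB_box)

theorem ae_forall_apply_ne (w : ι → ℝ) : ∀ᵐ y : EuclideanSpace ℝ ι, ∀ i, y i ≠ w i :=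
  (PiLp.volume_preserving_ofLp ι).quasiMeasurePreserving.ae <|
    Filter.eventually_all.2 fun i ↦ Measure.ae_eval_ne _ i (w i)

theorem exists_coordinate_exponents {S : Finset ι} {α β : ℝ} (hα : 0 ≤ α) (hαS : α < S.card)
    (hβ : 0 ≤ β) (hβα : β + α < Fintype.card ι) :
    ∃ s a : ι → ℝ, (∀ i, 0 ≤ s i) ∧ (∀ i, 0 ≤ a i) ∧ (∀ i, s i + a i < 1) ∧
      (∀ i ∉ S, a i = 0) ∧ ∑ i, s i = β ∧ ∑ i ∈ S, a i = α := by
  let a : ι → ℝ := (S : Set ι).indicator fun _ ↦ α / S.card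
  let θ : ℝ := β / (Fintype.card ι - α)
  have hS_pos : (0 : ℝ) < S.card := hα.trans_lt hαS
  have h_gap : 0 < Fintype.card ι - α := by linarith
  have ha_mem (i : ι) (hi : i ∈ S) : a i = α / S.card := indicator_of_mem hi _
  have ha_notMem (i : ι) (hi : i ∉ S) : a i = 0 := indicator_of_notMem hi _
  have ha_nonneg (i : ι) : 0 ≤ a i := indicator_nonneg (fun _ _ ↦ by positivity) i
  have ha_lt_one (i : ι) : a i < 1 := by
    by_cases hi : i ∈ S
    · rwa [ha_mem i hi, div_lt_one hS_pos]
    · rw [ha_notMem i hi]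
      exact zero_lt_one
  have hθ_nonneg : 0 ≤ θ := by positivity
  have hθ_lt_one : θ < 1 := (div_lt_one h_gap).2 (by linarith)
  have h_room (i : ι) : θ * (1 - a i) < 1 - a i :=
    mul_lt_of_lt_one_left (sub_pos.2 (ha_lt_one i)) hθ_lt_one
  have ha_sum : ∑ i ∈ S, a i = α := by
    rw [Finset.sum_congr rfl ha_mem, Finset.sum_const, nsmul_eq_mul, mul_div_cancel₀ _ hS_pos.ne']
  have ha_sum_univ : ∑ i, a i = α := by
    rw [← ha_sum, Finset.sum_subset S.subset_univ fun i _ ↦ ha_notMem i]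
  refine ⟨fun i ↦ θ * (1 - a i), a, fun i ↦ mul_nonneg hθ_nonneg (sub_nonneg.2 (ha_lt_one i).le),
    ha_nonneg, fun i ↦ by linarith [h_room i], ha_notMem, ?_, ha_sum⟩
  calc ∑ i, θ * (1 - a i)
    _ = θ * (Fintype.card ι - α) := by
        rw [← Finset.mul_sum, Finset.sum_sub_distrib, ha_sum_univ]
        simp
    _ = β := div_mul_cancel₀ _ h_gap.ne'

theorem norm_rpow_neg_sum_mul_sqrt_sum_sq_rpow_neg_sum_le_prod {S : Finset ι} {s a : ι → ℝ}
    {x y : EuclideanSpace ℝ ι} (hS : S.Nonempty) (hs : ∀ i, 0 ≤ s i) (ha : ∀ i, 0 ≤ a i)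
    (haS : ∀ i ∉ S, a i = 0) (hx : ∀ i, x i ≠ 0) (hy : ∀ i ∈ S, y i ≠ 0) :
    ‖x‖ ^ (-∑ i, s i) * √(∑ i ∈ S, y i ^ 2) ^ (-∑ i ∈ S, a i) ≤
      ∏ i, |x i| ^ (-s i) * |y i| ^ (-a i) := by
  have h_prod : ∏ i ∈ S, |y i| ^ (-a i) = ∏ i, |y i| ^ (-a i) :=
    Finset.prod_subset S.subset_univ fun i _ hi ↦ by simp [haS i hi]
  have h_norm : ‖x‖ = √(∑ i, x i ^ 2) := by simp [EuclideanSpace.norm_eq]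
  rw [Finset.prod_mul_distrib, ← h_prod, h_norm]
  exact mul_le_mul
    (sqrt_sum_sq_rpow_neg_sum_le_prod (hS.mono S.subset_univ) (fun i _ ↦ hs i) fun i _ ↦ hx i)
    (sqrt_sum_sq_rpow_neg_sum_le_prod hS (fun i _ ↦ ha i) hy)
    (by positivity) (by positivity)

theorem stmt_9_general (S : Finset ι) {α γ : ℝ} (hα : 0 ≤ α) (hαγ : α < γ)
    (hγ : γ ≤ Fintype.card ι) (hαS : α < S.card) {B : Set (EuclideanSpace ℝ ι)}
    (hB : Bornology.IsBounded B) :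
    IsL1Bounded (fun z y : EuclideanSpace ℝ ι ↦
      ‖y - z‖ ^ (-(Fintype.card ι : ℝ) + γ) * √(∑ i ∈ S, y i ^ 2) ^ (-α)) (volume.restrict B) := by
  obtain ⟨s, a, hs, ha, hsa, haS, hs_sum, ha_sum⟩ :=
    exists_coordinate_exponents hα hαS (sub_nonneg.2 hγ) (by linarith)
  have hS : S.Nonempty := Finset.card_pos.1 (by exact_mod_cast hα.trans_lt hαS)
  refine (isL1Bounded_prod_abs_sub_rpow_neg_mul_abs_rpow_neg hs ha hsa hB).mono
    (fun z ↦ Measurable.aestronglyMeasurable (by fun_prop)) fun z ↦ ae_restrict_of_ae ?_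
  -- The bound can fail where some `y i` or `y i - z i` is `0`, since there `0 ^ (-p) = 0` in `ℝ`.
  filter_upwards [ae_forall_apply_ne z, ae_forall_apply_ne 0] with y hyz hy
  rw [neg_add_eq_sub, ← neg_sub (Fintype.card ι : ℝ), ← hs_sum, ← ha_sum,
    Real.norm_of_nonneg (by positivity)]
  exact (norm_rpow_neg_sum_mul_sqrt_sum_sq_rpow_neg_sum_le_prod (x := y - z) hS hs ha haS
    (fun i ↦ sub_ne_zero.2 (hyz i)) fun i _ ↦ hy i).trans (Real.le_norm_self _)

end Coordinates

theorem card_filter_le_val (N k : ℕ) :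
    (Finset.univ.filter fun i : Fin N ↦ k ≤ i).card = N - k := by
  have h := Finset.card_filter_add_card_filter_not (s := Finset.univ) fun i : Fin N ↦ (i : ℕ) < k
  simp only [not_lt, Fin.card_filter_val_lt, Finset.card_univ, Fintype.card_fin] at h
  omega

theorem stmt_9 (N k : ℕ) (hN : 3 ≤ N) (hk : k + 2 < N) (α γ : ℝ)
    (hα : 0 < α) (hαγ : α < γ) (hγ : γ < (N : ℝ)) (hαk : α < (N : ℝ) - k)
    (B : Set (EuclideanSpace ℝ (Fin N))) (hB : Bornology.IsBounded B) :
    ∃ Cb : ℝ, ∀ z : EuclideanSpace ℝ (Fin N),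
      (∫ y in B, ‖y - z‖ ^ (-(N : ℝ) + γ) *
          (Real.sqrt (∑ i : Fin N, if k ≤ (i : ℕ) then (y i) ^ 2 else 0)) ^ (-α)) ≤ Cb := by
  have hαS : α < (Finset.univ.filter fun i : Fin N ↦ k ≤ i).card := by
    rwa [card_filter_le_val, Nat.cast_sub (by omega)]
  simpa only [Finset.sum_filter, Fintype.card_fin] using
    (stmt_9_general _ hα.le hαγ (by simpa using hγ.le) hαS hB).exists_integral_le
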